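/- Let (R,S,P,Q,φ,ψ) be a Morita context over k and M an (R,R)-bimodule with symmetric k-action. Then the composite θ_• ∘ γ_• is chain homotopic to the identity of C_•(S,M̃): there exist k-linear maps h̃_n : C_n(S,M̃) → C_{n+1}(S,M̃) with b ∘ h̃_0 = θ_0 ∘ γ_0 − id and b ∘ h̃_n + h̃_{n−1} ∘ b = θ_n ∘ γ_n − id for all n ≥ 1. -/

import Mathlib

open scoped TensorProduct
open MulOpposite

universe u

/-- The `k`-submodule of balancing relations `(m·a) ⊗ n − m ⊗ (a·n)` inside `M ⊗[k] N`,
for a `k`-algebra `A`, a right `A`-module `M` and a left `A`-module `N`.  The balanced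
tensor product `M ⊗_A N` is the quotient of `M ⊗[k] N` by this submodule. -/
def midRel (k A M N : Type u) [CommRing k] [Ring A] [Algebra k A]
    [AddCommGroup M] [Module k M] [Module Aᵐᵒᵖ M]
    [AddCommGroup N] [Module k N] [Module A N] :
    Submodule k (TensorProduct k M N) :=
  Submodule.span k {x | ∃ (m : M) (a : A) (n : N),
    x = (op a • m) ⊗ₜ[k] n - m ⊗ₜ[k] (a • n)}

/-- A Morita context `(R, S, P, Q, φ, ψ)` over the commutative ground ring `k`:
`P` is an `(S,R)`-bimodule and `Q` an `(R,S)`-bimodule (both with symmetric `k`-action,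
right actions being encoded as left actions of the opposite algebras), and `φ` and `ψ` are
`k`-bilinear pairings `P × Q → S` and `Q × P → R` which descend to bimodule isomorphisms
`φ : P ⊗_R Q ≅ S` and `ψ : Q ⊗_S P ≅ R` on the balanced tensor products:  the lifted maps on
`P ⊗[k] Q` resp. `Q ⊗[k] P` are surjective and their kernels are exactly the corresponding
submodules of balancing relations (so that the induced maps on the quotients realizing
`P ⊗_R Q` and `Q ⊗_S P` are well defined bijections); moreover the compatibilities
`φ(p ⊗ q)·p' = p·ψ(q ⊗ p')` and `ψ(q ⊗ p)·q' = q·φ(p ⊗ q')` hold. -/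
structure MoritaContext (k R S P Q : Type u) [CommRing k] [Ring R] [Ring S]
    [Algebra k R] [Algebra k S]
    [AddCommGroup P] [Module k P] [Module S P] [Module Rᵐᵒᵖ P]
    [SMulCommClass S Rᵐᵒᵖ P] [IsScalarTower k S P] [IsScalarTower k Rᵐᵒᵖ P]
    [AddCommGroup Q] [Module k Q] [Module R Q] [Module Sᵐᵒᵖ Q]
    [SMulCommClass R Sᵐᵒᵖ Q] [IsScalarTower k R Q] [IsScalarTower k Sᵐᵒᵖ Q] : Type u where
  φ : P →ₗ[k] Q →ₗ[k] S
  ψ : Q →ₗ[k] P →ₗ[k] R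
  φ_ker : LinearMap.ker (TensorProduct.lift φ) = midRel k R P Q
  φ_surj : Function.Surjective (TensorProduct.lift φ)
  ψ_ker : LinearMap.ker (TensorProduct.lift ψ) = midRel k S Q P
  ψ_surj : Function.Surjective (TensorProduct.lift ψ)
  φ_left : ∀ (s : S) (p : P) (q : Q), φ (s • p) q = s * φ p q
  φ_right : ∀ (s : S) (p : P) (q : Q), φ p (op s • q) = φ p q * s
  ψ_left : ∀ (r : R) (q : Q) (p : P), ψ (r • q) p = r * ψ q p
  ψ_right : ∀ (r : R) (q : Q) (p : P), ψ q (op r • p) = ψ q p * r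
  assoc_φψ : ∀ (p : P) (q : Q) (p' : P), φ p q • p' = op (ψ q p') • p
  assoc_ψφ : ∀ (q : Q) (p : P) (q' : Q), ψ q p • q' = op (φ p q') • q

section Hochschild

variable (k : Type u) [CommRing k]

/-- The `n`-th Hochschild chain module `C_n(A, N) = N ⊗_k A^{⊗_k n}`. -/
abbrev HChain (A N : Type u) [Ring A] [Algebra k A] [AddCommGroup N] [Module k N]
    (n : ℕ) :=
  N ⊗[k] (PiTensorProduct k (fun _ : Fin n => A))

/-- The generator `m ⊗ r₁ ⊗ ⋯ ⊗ rₙ` of `C_n(A, N)`. -/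
noncomputable def hgen {A N : Type u} [Ring A] [Algebra k A] [AddCommGroup N] [Module k N]
    {n : ℕ} (m : N) (r : Fin n → A) : HChain k A N n :=
  m ⊗ₜ[k] PiTensorProduct.tprod k r

/-- The tuple obtained from the tuple `r` of length `n + 1` by multiplying the entries at
the (0-based) positions `j` and `j + 1` (all other entries are kept, in their order). -/
def mergeAt {A : Type u} [Mul A] {n : ℕ} (r : Fin (n + 1) → A) (j : Fin n) : Fin n → A :=
  fun l =>
    if l.val < j.val then r l.castSucc
    else if l.val = j.val then r l.castSucc * r l.succ
    else r l.succ

end Hochschild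

/-!
Put `u (i, j) = φ (p_i ⊗ q'_j)` and `v (i, j) = φ (p'_j ⊗ q_i)`. The Morita identities give
`∑ v c * u c = 1` and turn `θ ∘ γ` into
`x ⊗ s₁ ⊗ ⋯ ⊗ sₙ ↦ ∑ u_{f₀} x v_{f₁} ⊗ u_{f₁} s₁ v_{f₂} ⊗ ⋯ ⊗ u_{fₙ} sₙ v_{f₀}`.
This map is homotopic to the identity for every such `u`, `v` and every `(S, S)`-bimodule, because
`∑ x v_{a₀} ⊗ u_{a₀} s₁ v_{a₁} ⊗ ⋯ ⊗ u_{aₜ₋₁} sₜ v_{aₜ} ⊗ u_{aₜ} ⊗ sₜ₊₁ ⊗ ⋯ ⊗ sₙ`, `0 ≤ t ≤ n`,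
are the terms of a simplicial homotopy. A face contracting a tensor sign to the left of `u_{aₜ}`
produces an inner factor `∑ v c * u c = 1`, so that the face just left of `u_{aₜ₊₁}` cancels the one
just right of `u_{aₜ}`; the two faces left over are the identity (`t = 0`) and the conjugated chain
(`t = n`).
-/

/-- The alternating-sign bookkeeping of a simplicial homotopy, over values `F t j` of the `j`-th
face on the `t`-th homotopy term and `E t j` of the `t`-th homotopy term on the `j`-th face. -/
theorem sum_neg_one_pow_smul_simplicialHomotopy {G : Type*} [AddCommGroup G] (F E : ℕ → ℕ → G)
    (n : ℕ) (h_lower : ∀ t j, j ≤ t → t < n → F (t + 1) j = E t j)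
    (h_upper : ∀ t j, t < j → j ≤ n → F t (j + 1) = E t j)
    (h_diag : ∀ t, t < n → F (t + 1) (t + 1) = F t (t + 1)) :
    ∑ t ∈ Finset.range (n + 1), ∑ j ∈ Finset.range (n + 2), (-1 : ℤ) ^ (t + j) • F t j
      + ∑ t ∈ Finset.range n, ∑ j ∈ Finset.range (n + 1), (-1 : ℤ) ^ (t + j) • E t j
      = F 0 0 - F n (n + 1) := by
  let lower (t : ℕ) : G := ∑ j ∈ Finset.range t, (-1 : ℤ) ^ (t + j) • F t j
  let upper (t : ℕ) : G := ∑ j ∈ Finset.Ico (t + 2) (n + 2), (-1 : ℤ) ^ (t + j) • F t j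
  have row_F (t : ℕ) (ht : t ∈ Finset.range (n + 1)) :
      ∑ j ∈ Finset.range (n + 2), (-1 : ℤ) ^ (t + j) • F t j
        = lower t + upper t + (F t t - F t (t + 1)) := by
    have ht' : t < n + 1 := Finset.mem_range.mp ht
    rw [← Finset.sum_range_add_sum_Ico _ (show t ≤ n + 2 by omega),
      Finset.sum_eq_sum_Ico_succ_bot (by omega), Finset.sum_eq_sum_Ico_succ_bot (by omega),
      ← add_assoc t t 1, pow_succ, Even.neg_one_pow ⟨t, rfl⟩]
    simp only [lower, upper, one_smul, one_mul, neg_smul]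
    abel
  have row_E (t : ℕ) (ht : t ∈ Finset.range n) :
      ∑ j ∈ Finset.range (n + 1), (-1 : ℤ) ^ (t + j) • E t j = -lower (t + 1) - upper t := by
    have ht' : t < n := Finset.mem_range.mp ht
    rw [← Finset.sum_range_add_sum_Ico _ (show t + 1 ≤ n + 1 by omega), sub_eq_add_neg]
    simp only [lower, upper, ← Finset.sum_Ico_add' _ (t + 1) (n + 1) 1, ← Finset.sum_neg_distrib]
    congr 1 <;> refine Finset.sum_congr rfl fun j hj => ?_
    · rw [h_lower t j (by simpa [Nat.lt_succ_iff] using hj) ht', add_right_comm, pow_succ]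
      simp
    · rw [Finset.mem_Ico] at hj
      rw [h_upper t j (by omega) (by omega), ← add_assoc, pow_succ]
      simp
  have telescope_diag : ∑ t ∈ Finset.range (n + 1), (F t t - F t (t + 1))
      = F 0 0 - F n (n + 1) := by
    rw [Finset.sum_range_succ, Finset.sum_congr rfl fun t ht => by
      rw [← h_diag t (Finset.mem_range.mp ht)], Finset.sum_range_sub' fun t => F t t]
    abel
  have upper_last : upper n = 0 := by simp [upper]
  rw [Finset.sum_congr rfl row_F, Finset.sum_congr rfl row_E, Finset.sum_add_distrib,
    Finset.sum_add_distrib, telescope_diag, Finset.sum_range_succ' lower,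
    Finset.sum_range_succ upper, Finset.sum_sub_distrib, Finset.sum_neg_distrib, upper_last]
  simp only [lower, Finset.range_zero, Finset.sum_empty]
  abel

section Words

variable {A : Type*}

/-- The sequence obtained from `a` by inserting the entry `c` at position `j`. -/
def insertAt (j : ℕ) (c : A) (a : ℕ → A) (l : ℕ) : A :=
  if l < j then a l else if l = j then c else a (l - 1)

theorem insertNth_eq_insertAt {n : ℕ} (j : Fin (n + 1)) (c : A) (a : ℕ → A) :
    j.insertNth (α := fun _ => A) c (fun l : Fin n => a l)
      = fun l : Fin (n + 1) => insertAt j c a l := by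
  refine Fin.insertNth_eq_iff.mpr ⟨by simp [insertAt], ?_⟩
  funext l
  simp only [Fin.removeNth, Fin.succAbove, Fin.lt_def, insertAt]
  grind

/-- A word of length `t + 1`, extended to a sequence so that its letters can be addressed by
natural numbers; the letters beyond the end of the word are junk (the index wraps around). -/
def extendWord {t : ℕ} (a : Fin (t + 1) → A) (l : ℕ) : A :=
  a (Fin.ofNat (t + 1) l)

theorem extendWord_of_lt {t l : ℕ} (a : Fin (t + 1) → A) (hl : l < t + 1) :
    extendWord a l = a ⟨l, hl⟩ :=
  congrArg a (Fin.ext (Nat.mod_eq_of_lt hl))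

theorem extendWord_insertNth {t l : ℕ} (j : Fin (t + 2)) (c : A) (a : Fin (t + 1) → A)
    (hl : l < t + 2) :
    extendWord (j.insertNth (α := fun _ => A) c a) l = insertAt j c (extendWord a) l := by
  have ha : a = fun l : Fin (t + 1) => extendWord a l :=
    funext fun l => (extendWord_of_lt a l.2).symm
  rw [extendWord_of_lt _ hl]
  conv_lhs => rw [ha, insertNth_eq_insertAt]

theorem sum_extendWord_succ [Fintype A] {G : Type*} [AddCommMonoid G] {t j : ℕ} (hj : j ≤ t + 1)
    (f : (ℕ → A) → G) (hf : ∀ a b, (∀ l ≤ t + 1, a l = b l) → f a = f b) :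
    ∑ a : Fin (t + 2) → A, f (extendWord a)
      = ∑ a : Fin (t + 1) → A, ∑ c : A, f (insertAt j c (extendWord a)) := by
  rw [← (Fin.insertNthEquiv (fun _ => A) ⟨j, Nat.lt_succ_of_le hj⟩).sum_comp,
    Fintype.sum_prod_type_right]
  exact Finset.sum_congr rfl fun a _ => Finset.sum_congr rfl fun c _ =>
    hf _ _ fun l hl => extendWord_insertNth _ c a (Nat.lt_succ_of_le hl)

end Words

section Generators

variable (k : Type u) [CommRing k] {S N : Type u} [Ring S] [Algebra k S]
  [AddCommGroup N] [Module k N]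

/-- The generator `x ⊗ s₀ ⊗ ⋯ ⊗ sₙ₋₁` of `C_n(S, N)` given by the first `n` entries of a
sequence; sequences keep the index arithmetic in `ℕ`. -/
noncomputable def seqGen (n : ℕ) (x : N) (s : ℕ → S) : HChain k S N n :=
  hgen k x fun l : Fin n => s l

variable {k}

theorem HChain.ext_seqGen {n : ℕ} {C : Type*} [AddCommGroup C] [Module k C]
    {f g : HChain k S N n →ₗ[k] C} (h : ∀ x s, f (seqGen k n x s) = g (seqGen k n x s)) :
    f = g := by
  refine TensorProduct.ext (LinearMap.ext fun x => PiTensorProduct.ext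
    (MultilinearMap.ext fun s => ?_))
  have hs : (fun l : Fin n => if hl : (l : ℕ) < n then s ⟨l, hl⟩ else 0) = s :=
    funext fun l => dif_pos l.2
  have := h x fun l => if hl : l < n then s ⟨l, hl⟩ else 0
  rwa [seqGen, hs] at this

theorem sum_seqGen_coeff {A : Type*} [Fintype A] (n : ℕ) (x : A → N) (s : ℕ → S) :
    ∑ a, seqGen k n (x a) s = seqGen k n (∑ a, x a) s :=
  (TensorProduct.sum_tmul _ _ _).symm

theorem sum_seqGen_update {A : Type*} [Fintype A] {n i : ℕ} (hi : i < n) (x : N) (s : ℕ → S)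
    (c : A → S) :
    ∑ a, seqGen k n x (Function.update s i (c a))
      = seqGen k n x (Function.update s i (∑ a, c a)) := by
  have restrict_update (y : S) : (fun l : Fin n => Function.update s i y l)
      = Function.update (fun l : Fin n => s l) ⟨i, hi⟩ y :=
    Function.update_comp_eq_of_injective s Fin.val_injective ⟨i, hi⟩ y
  simp only [seqGen, hgen, restrict_update, MultilinearMap.map_update_sum, TensorProduct.tmul_sum]

end Generators

section Faces

variable (k : Type u) [CommRing k] {S N : Type u} [Ring S] [Algebra k S]
  [AddCommGroup N] [Module k N] [Module S N] [Module Sᵐᵒᵖ N]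

/-- The coefficient of the `j`-th face of `x ⊗ s₀ ⊗ ⋯ ⊗ sₙ`. Faces are numbered by the position
of the tensor sign they contract, from the left, so the `j`-th one is `d_{n + 1 - j}` in the
notation of the Hochschild boundary. -/
def faceCoeff (n j : ℕ) (x : N) (s : ℕ → S) : N :=
  if j = 0 then op (s 0) • x else if j = n + 1 then s n • x else x

/-- The tensor factors of the `j`-th face of `x ⊗ s₀ ⊗ ⋯ ⊗ sₙ`, numbered as in `faceCoeff`. -/
def faceSeq (j : ℕ) (s : ℕ → S) (l : ℕ) : S :=
  if l + 1 < j then s l else if l + 1 = j then s l * s (l + 1) else s (l + 1)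

/-- The `j`-th face of the generator `x ⊗ s₀ ⊗ ⋯ ⊗ sₙ`, numbered as in `faceCoeff`. -/
noncomputable def face (n j : ℕ) (x : N) (s : ℕ → S) : HChain k S N n :=
  seqGen k n (faceCoeff n j x s) (faceSeq j s)

/-- The family `b` is the Hochschild boundary of `C_•(S, N)`. -/
def IsHochschildBoundary (b : ∀ n, HChain k S N (n + 1) →ₗ[k] HChain k S N n) : Prop :=
  ∀ (n : ℕ) (x : N) (s : Fin (n + 1) → S),
    b n (hgen k x s) =
      hgen k (s (Fin.last n) • x) (Fin.init s)
        + ∑ j : Fin n, ((-1 : ℤ) ^ (n - j.val)) • hgen k x (mergeAt s j)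
        + ((-1 : ℤ) ^ (n + 1)) • hgen k (op (s 0) • x) (Fin.tail s)

variable {k}

theorem face_zero (n : ℕ) (x : N) (s : ℕ → S) :
    face k n 0 x s = hgen k (op (s 0) • x) (Fin.tail fun l : Fin (n + 1) => s l) :=
  rfl

theorem face_last (n : ℕ) (x : N) (s : ℕ → S) :
    face k n (n + 1) x s = hgen k (s n • x) (Fin.init fun l : Fin (n + 1) => s l) := by
  rw [face, seqGen, faceCoeff, if_neg n.succ_ne_zero, if_pos rfl]
  exact congrArg _ (funext fun l => if_pos (Nat.succ_lt_succ l.2))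

theorem face_succ {n : ℕ} (j : Fin n) (x : N) (s : ℕ → S) :
    face k n (j + 1) x s = hgen k x (mergeAt (fun l : Fin (n + 1) => s l) j) := by
  rw [face, seqGen, faceCoeff, if_neg (Nat.succ_ne_zero _), if_neg (by omega)]
  exact congrArg _ (funext fun l => by simp [faceSeq, mergeAt])

theorem IsHochschildBoundary.apply_seqGen
    {b : ∀ n, HChain k S N (n + 1) →ₗ[k] HChain k S N n} (hb : IsHochschildBoundary k b)
    (n : ℕ) (x : N) (s : ℕ → S) :
    b n (seqGen k (n + 1) x s)
      = (-1 : ℤ) ^ (n + 1) • ∑ j ∈ Finset.range (n + 2), (-1 : ℤ) ^ j • face k n j x s := by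
  have sign_middle (j : Fin n) : (-1 : ℤ) ^ (n + 1) * (-1) ^ (j + 1 : ℕ) = (-1) ^ (n - j : ℕ) := by
    rw [← pow_add, show n + 1 + (j + 1) = 2 * (j + 1) + (n - j) by omega, pow_add, pow_mul]
    simp
  have sign_last : (-1 : ℤ) ^ (n + 1) * (-1) ^ (n + 1) = 1 := by rw [← mul_pow]; simp
  rw [seqGen, hb, Finset.sum_range_succ, Finset.sum_range_succ', Finset.sum_range, smul_add,
    smul_add, Finset.smul_sum]
  simp only [smul_smul, sign_middle, sign_last, pow_zero, one_smul, face_zero, face_last,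
    face_succ, Fin.val_last, Fin.val_zero]
  abel

end Faces

section Conjugation

variable (k : Type u) [CommRing k] {S N : Type u} [Ring S] [Algebra k S]
  [AddCommGroup N] [Module k N] {A : Type*} (u v : A → S)

/-- The sequence `u_{a₀} s₀ v_{a₁}, …, u_{aₜ₋₁} sₜ₋₁ v_{aₜ}, u_{aₜ}, sₜ, sₜ₊₁, …`. -/
def conjSeq (t : ℕ) (a : ℕ → A) (s : ℕ → S) : ℕ → S :=
  insertAt t (u (a t)) fun l => if l < t then u (a l) * s l * v (a (l + 1)) else s l

variable {u v}

theorem faceSeq_conjSeq_of_lt {t j : ℕ} (htj : t < j) (a : ℕ → A) (s : ℕ → S) :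
    faceSeq (j + 1) (conjSeq u v t a s) = conjSeq u v t a (faceSeq j s) := by
  funext l
  simp only [faceSeq, conjSeq, insertAt]
  grind

theorem faceSeq_zero_conjSeq_insertAt (t : ℕ) (c : A) (a : ℕ → A) (s : ℕ → S) :
    faceSeq 0 (conjSeq u v (t + 1) (insertAt 0 c a) s) = conjSeq u v t a (faceSeq 0 s) := by
  funext l
  simp only [faceSeq, conjSeq, insertAt]
  grind

theorem faceSeq_succ_conjSeq_insertAt {t j : ℕ} (hjt : j < t) (c : A) (a : ℕ → A) (s : ℕ → S) :
    faceSeq (j + 1) (conjSeq u v (t + 1) (insertAt (j + 1) c a) s)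
      = Function.update (conjSeq u v t a (faceSeq (j + 1) s)) j
          (u (a j) * s j * (v c * u c) * s (j + 1) * v (a (j + 1))) := by
  funext l
  simp only [faceSeq, conjSeq, insertAt, Function.update_apply]
  grind

theorem faceSeq_conjSeq_insertAt_self (t : ℕ) (c : A) (a : ℕ → A) (s : ℕ → S) :
    faceSeq (t + 1) (conjSeq u v (t + 1) (insertAt (t + 1) c a) s)
      = Function.update (faceSeq (t + 1) (conjSeq u v t a s)) t
          (u (a t) * s t * (v c * u c)) := by
  funext l
  simp only [faceSeq, conjSeq, insertAt, Function.update_apply]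
  grind

variable [Module S N] [Module Sᵐᵒᵖ N] [Fintype A] (u v)

/-- The `t`-th term of the homotopy on `x ⊗ s₀ ⊗ ⋯ ⊗ sₙ₋₁`, namely the sum of
`x v_{a₀} ⊗ u_{a₀} s₀ v_{a₁} ⊗ ⋯ ⊗ u_{aₜ₋₁} sₜ₋₁ v_{aₜ} ⊗ u_{aₜ} ⊗ sₜ ⊗ ⋯ ⊗ sₙ₋₁`
over the words `a` of length `t + 1`. -/
noncomputable def conjTerm (n t : ℕ) (x : N) (s : ℕ → S) : HChain k S N (n + 1) :=
  ∑ a : Fin (t + 1) → A,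
    seqGen k (n + 1) (op (v (extendWord a 0)) • x) (conjSeq u v t (extendWord a) s)

/-- The `j`-th face of `conjTerm`. -/
noncomputable def faceConjTerm (n t j : ℕ) (x : N) (s : ℕ → S) : HChain k S N n :=
  ∑ a : Fin (t + 1) → A,
    face k n j (op (v (extendWord a 0)) • x) (conjSeq u v t (extendWord a) s)

variable {k u v}

theorem faceConjTerm_succ {n t j i : ℕ} (hi : i ≤ t + 1) (x : N) (s : ℕ → S) :
    faceConjTerm k u v n (t + 1) j x s
      = ∑ a : Fin (t + 1) → A, ∑ c,
          face k n j (op (v (insertAt i c (extendWord a) 0)) • x)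
            (conjSeq u v (t + 1) (insertAt i c (extendWord a)) s) := by
  refine sum_extendWord_succ hi (fun a => face k n j (op (v (a 0)) • x) (conjSeq u v (t + 1) a s))
    fun a b hab => ?_
  have conjSeq_eq : conjSeq u v (t + 1) a s = conjSeq u v (t + 1) b s := by
    funext l
    simp only [conjSeq, insertAt]
    grind
  rw [conjSeq_eq, hab 0 (Nat.zero_le _)]

theorem faceConjTerm_lower_zero (huv : ∑ c, v c * u c = 1) (n t : ℕ) (x : N)
    (s : ℕ → S) :
    faceConjTerm k u v (n + 1) (t + 1) 0 x s
      = conjTerm k u v n t (faceCoeff n 0 x s) (faceSeq 0 s) := by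
  rw [faceConjTerm_succ (Nat.zero_le _), conjTerm]
  refine Finset.sum_congr rfl fun a _ => ?_
  have coeff (c : A) : faceCoeff (n + 1) 0 (op (v (insertAt 0 c (extendWord a) 0)) • x)
      (conjSeq u v (t + 1) (insertAt 0 c (extendWord a)) s)
        = op (v c * u c * (s 0 * v (extendWord a 0))) • x := by
    simp [faceCoeff, conjSeq, insertAt, smul_smul, mul_assoc]
  simp only [face, coeff, faceSeq_zero_conjSeq_insertAt, sum_seqGen_coeff, ← Finset.sum_smul,
    ← Finset.op_sum, ← Finset.sum_mul, huv, one_mul]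
  simp [faceCoeff, smul_smul]

theorem faceConjTerm_lower_succ (huv : ∑ c, v c * u c = 1) {n t j : ℕ} (hjt : j < t) (ht : t ≤ n)
    (x : N) (s : ℕ → S) :
    faceConjTerm k u v (n + 1) (t + 1) (j + 1) x s
      = conjTerm k u v n t (faceCoeff n (j + 1) x s) (faceSeq (j + 1) s) := by
  rw [faceConjTerm_succ (by omega : j + 1 ≤ t + 1), conjTerm]
  refine Finset.sum_congr rfl fun a _ => ?_
  have coeff_left (y : N) (r : ℕ → S) : faceCoeff (n + 1) (j + 1) y r = y := by
    rw [faceCoeff, if_neg j.succ_ne_zero, if_neg (by omega)]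
  have coeff_right : faceCoeff n (j + 1) x s = x := by
    rw [faceCoeff, if_neg j.succ_ne_zero, if_neg (by omega)]
  have insert_head (c : A) : insertAt (j + 1) c (extendWord a) 0 = extendWord a 0 := rfl
  simp only [face, coeff_left, coeff_right, insert_head, faceSeq_succ_conjSeq_insertAt hjt,
    sum_seqGen_update (show j < n + 1 by omega), ← Finset.sum_mul, ← Finset.mul_sum, huv, mul_one]
  rw [Function.update_eq_self_iff.mpr]
  simp [conjSeq, insertAt, faceSeq, hjt, mul_assoc]

theorem faceConjTerm_diag (huv : ∑ c, v c * u c = 1) {n t : ℕ} (ht : t < n) (x : N)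
    (s : ℕ → S) :
    faceConjTerm k u v n (t + 1) (t + 1) x s = faceConjTerm k u v n t (t + 1) x s := by
  rw [faceConjTerm_succ le_rfl, faceConjTerm]
  refine Finset.sum_congr rfl fun a _ => ?_
  have coeff (y : N) (r : ℕ → S) : faceCoeff n (t + 1) y r = y := by
    rw [faceCoeff, if_neg t.succ_ne_zero, if_neg (by omega)]
  have insert_head (c : A) : insertAt (t + 1) c (extendWord a) 0 = extendWord a 0 := rfl
  simp only [face, coeff, insert_head, faceSeq_conjSeq_insertAt_self, sum_seqGen_update ht,
    ← Finset.mul_sum, huv, mul_one]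
  rw [Function.update_eq_self_iff.mpr]
  simp [conjSeq, insertAt, faceSeq]

theorem faceConjTerm_upper [SMulCommClass S Sᵐᵒᵖ N] {n t j : ℕ} (htj : t < j) (hj : j ≤ n + 1)
    (x : N) (s : ℕ → S) :
    faceConjTerm k u v (n + 1) t (j + 1) x s
      = conjTerm k u v n t (faceCoeff n j x s) (faceSeq j s) := by
  refine Finset.sum_congr rfl fun a _ => ?_
  have coeff : faceCoeff (n + 1) (j + 1) (op (v (extendWord a 0)) • x)
      (conjSeq u v t (extendWord a) s) = op (v (extendWord a 0)) • faceCoeff n j x s := by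
    rw [faceCoeff, faceCoeff, if_neg j.succ_ne_zero, if_neg (show j ≠ 0 by omega)]
    rcases hj.eq_or_lt with rfl | hj
    · have conjSeq_last : conjSeq u v t (extendWord a) s (n + 1) = s n := by
        rw [conjSeq, insertAt, if_neg (by omega), if_neg (by omega), if_neg (by omega)]; rfl
      rw [if_pos rfl, if_pos rfl, conjSeq_last, smul_comm]
    · rw [if_neg (by omega), if_neg (by omega)]
  rw [face, coeff, faceSeq_conjSeq_of_lt htj]

theorem faceConjTerm_zero_zero (huv : ∑ c, v c * u c = 1) (n : ℕ) (x : N) (s : ℕ → S) :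
    faceConjTerm k u v n 0 0 x s = seqGen k n x s := by
  have coeff (a : Fin 1 → A) : faceCoeff n 0 (op (v (extendWord a 0)) • x)
      (conjSeq u v 0 (extendWord a) s) = op (v (a 0) * u (a 0)) • x := by
    simp [faceCoeff, conjSeq, insertAt, smul_smul, extendWord]
  have seq (a : Fin 1 → A) : faceSeq 0 (conjSeq u v 0 (extendWord a) s) = s := by
    funext l
    simp [faceSeq, conjSeq, insertAt]
  have sum_word : ∑ a : Fin 1 → A, v (a 0) * u (a 0) = 1 := by
    rw [← huv]
    exact (Equiv.funUnique (Fin 1) A).sum_comp fun c => v c * u c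
  simp only [faceConjTerm, face, coeff, seq]
  rw [sum_seqGen_coeff, ← Finset.sum_smul, ← Finset.op_sum, sum_word, op_one, one_smul]

end Conjugation

section Homotopy

variable (k : Type u) [CommRing k] {S N : Type u} [Ring S] [Algebra k S]
  [AddCommGroup N] [Module k N] [Module Sᵐᵒᵖ N] [IsScalarTower k Sᵐᵒᵖ N]
  {A : Type*} [Fintype A] (u v : A → S)

/-- `conjTerm` as a linear map. -/
noncomputable def conjInsert (n : ℕ) (t : Fin (n + 1)) :
    HChain k S N n →ₗ[k] HChain k S N (n + 1) :=
  ∑ a : Fin (t + 1) → A,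
    TensorProduct.map (Algebra.lsmul k k N (op (v (extendWord a 0))))
      (PiTensorProduct.lift (((PiTensorProduct.tprod k).curryMid t
        (u (extendWord a t))).compLinearMap fun l : Fin n =>
          if (l : ℕ) < t then
            LinearMap.mulLeftRight k (u (extendWord a l), v (extendWord a (l + 1)))
          else LinearMap.id))

/-- The chain homotopy from the identity to `cyclicConj`. -/
noncomputable def conjHomotopy (n : ℕ) : HChain k S N n →ₗ[k] HChain k S N (n + 1) :=
  (-1 : ℤ) ^ n • ∑ t : Fin (n + 1), (-1 : ℤ) ^ (t : ℕ) • conjInsert k u v n t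

variable {k}

theorem conjInsert_seqGen (n : ℕ) (t : Fin (n + 1)) (x : N) (s : ℕ → S) :
    conjInsert k u v n t (seqGen k n x s) = conjTerm k u v n t x s := by
  simp only [conjInsert, seqGen, hgen, LinearMap.sum_apply, TensorProduct.map_tmul,
    PiTensorProduct.lift.tprod, MultilinearMap.compLinearMap_apply,
    MultilinearMap.curryMid_apply_apply, conjTerm]
  refine Finset.sum_congr rfl fun a _ => congrArg _ (congrArg _ ?_)
  have apply_ite (l : Fin n) : (if (l : ℕ) < t then
      LinearMap.mulLeftRight k (u (extendWord a l), v (extendWord a (l + 1)))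
      else LinearMap.id) (s l)
        = if (l : ℕ) < t then u (extendWord a l) * s l * v (extendWord a (l + 1)) else s l := by
    split_ifs <;> simp
  simp only [apply_ite]
  exact insertNth_eq_insertAt t _ fun l =>
    if l < t then u (extendWord a l) * s l * v (extendWord a (l + 1)) else s l

theorem conjHomotopy_seqGen (n : ℕ) (x : N) (s : ℕ → S) :
    conjHomotopy k u v n (seqGen k n x s)
      = (-1 : ℤ) ^ n • ∑ t ∈ Finset.range (n + 1), (-1 : ℤ) ^ t • conjTerm k u v n t x s := by
  simp only [conjHomotopy, LinearMap.smul_apply, LinearMap.sum_apply, conjInsert_seqGen,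
    Finset.sum_range]

variable [Module S N] {u v} {b : ∀ n, HChain k S N (n + 1) →ₗ[k] HChain k S N n}

theorem IsHochschildBoundary.apply_conjHomotopy (hb : IsHochschildBoundary k b) (n : ℕ) (x : N)
    (s : ℕ → S) :
    b n (conjHomotopy k u v n (seqGen k n x s))
      = -∑ t ∈ Finset.range (n + 1), ∑ j ∈ Finset.range (n + 2),
          (-1 : ℤ) ^ (t + j) • faceConjTerm k u v n t j x s := by
  have apply_conjTerm (t : ℕ) : b n (conjTerm k u v n t x s) = (-1 : ℤ) ^ (n + 1) •
      ∑ j ∈ Finset.range (n + 2), (-1 : ℤ) ^ j • faceConjTerm k u v n t j x s := by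
    simp only [conjTerm, map_sum, hb.apply_seqGen, faceConjTerm, Finset.smul_sum]
    rw [Finset.sum_comm]
  have sign_sq : ((-1 : ℤ) ^ n) ^ 2 = 1 := by rw [pow_right_comm, neg_one_sq, one_pow]
  simp only [conjHomotopy_seqGen, map_zsmul, map_sum, apply_conjTerm, Finset.smul_sum,
    ← Finset.sum_neg_distrib, smul_smul, ← neg_smul]
  refine Finset.sum_congr rfl fun t _ => Finset.sum_congr rfl fun j _ => ?_
  congr 1
  linear_combination -(-1) ^ (t + j) * sign_sq

theorem IsHochschildBoundary.conjHomotopy_apply (hb : IsHochschildBoundary k b) (n : ℕ) (x : N)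
    (s : ℕ → S) :
    conjHomotopy k u v n (b n (seqGen k (n + 1) x s))
      = -∑ t ∈ Finset.range (n + 1), ∑ j ∈ Finset.range (n + 2),
          (-1 : ℤ) ^ (t + j) • conjTerm k u v n t (faceCoeff n j x s) (faceSeq j s) := by
  have sign_sq : ((-1 : ℤ) ^ n) ^ 2 = 1 := by rw [pow_right_comm, neg_one_sq, one_pow]
  simp only [hb.apply_seqGen, face, conjHomotopy_seqGen, map_zsmul, map_sum, Finset.smul_sum,
    ← Finset.sum_neg_distrib, smul_smul, ← neg_smul]
  rw [Finset.sum_comm]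
  refine Finset.sum_congr rfl fun t _ => Finset.sum_congr rfl fun j _ => ?_
  congr 1
  linear_combination -(-1) ^ (t + j) * sign_sq

variable [IsScalarTower k S N] (k u v)

/-- The map sending `x ⊗ s₁ ⊗ ⋯ ⊗ sₙ` to the sum over all `f` of
`u_{f₀} x v_{f₁} ⊗ u_{f₁} s₁ v_{f₂} ⊗ ⋯ ⊗ u_{fₙ} sₙ v_{f₀}`. -/
noncomputable def cyclicConj (n : ℕ) : HChain k S N n →ₗ[k] HChain k S N n :=
  ∑ f : Fin (n + 1) → A,
    TensorProduct.map
      (Algebra.lsmul k k N (u (f 0)) ∘ₗ Algebra.lsmul k k N (op (v (f 1))))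
      (PiTensorProduct.map fun l : Fin n =>
        LinearMap.mulLeftRight k (u (f l.succ), v (f (l.succ + 1))))

variable {k u v}

theorem cyclicConj_hgen (n : ℕ) (x : N) (s : Fin n → S) :
    cyclicConj k u v n (hgen k x s)
      = ∑ f : Fin (n + 1) → A, hgen k (u (f 0) • op (v (f 1)) • x)
          fun l : Fin n => u (f l.succ) * s l * v (f (l.succ + 1)) := by
  simp [cyclicConj, hgen, LinearMap.sum_apply]

theorem faceConjTerm_last (n : ℕ) (x : N) (s : ℕ → S) :
    faceConjTerm k u v n n (n + 1) x s = cyclicConj k u v n (seqGen k n x s) := by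
  let rotate : (Fin (n + 1) → A) ≃ (Fin (n + 1) → A) :=
    Equiv.arrowCongr (Equiv.addRight 1).symm (Equiv.refl A)
  rw [seqGen, cyclicConj_hgen, faceConjTerm, ← rotate.sum_comp]
  refine Finset.sum_congr rfl fun f _ => ?_
  have rotate_apply (l : ℕ) : extendWord (rotate f) l = f (Fin.ofNat (n + 1) l + 1) := rfl
  have rotate_val (l : Fin (n + 1)) : extendWord (rotate f) l = f (l + 1) := by
    rw [rotate_apply, Fin.ofNat_val_eq_self]
  have rotate_last : extendWord (rotate f) n = f 0 := by
    simpa using rotate_val (Fin.last n)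
  have rotate_castSucc (l : Fin n) : extendWord (rotate f) l = f l.succ := by
    simpa using rotate_val l.castSucc
  have rotate_succ (l : Fin n) : extendWord (rotate f) (l + 1) = f (l.succ + 1) :=
    rotate_val l.succ
  have rotate_zero : extendWord (rotate f) 0 = f 1 := by simpa using rotate_val 0
  rw [face_last]
  congr 1
  · simp [conjSeq, insertAt, rotate_last, rotate_zero]
  · funext l
    simp [conjSeq, insertAt, Fin.init, rotate_castSucc, rotate_succ]

theorem IsHochschildBoundary.comp_conjHomotopy_zero (hb : IsHochschildBoundary k b)
    (huv : ∑ c, v c * u c = 1) :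
    b 0 ∘ₗ conjHomotopy k u v 0 = cyclicConj k u v 0 - LinearMap.id := by
  refine HChain.ext_seqGen fun x s => ?_
  have key := sum_neg_one_pow_smul_simplicialHomotopy
    (fun t j => faceConjTerm k u v 0 t j x s) 0 0 (by simp) (by omega) (by simp)
  rw [Finset.sum_range_zero, add_zero] at key
  rw [LinearMap.comp_apply, hb.apply_conjHomotopy, key, faceConjTerm_zero_zero huv,
    faceConjTerm_last, neg_sub]
  rfl

theorem IsHochschildBoundary.comp_conjHomotopy_succ [SMulCommClass S Sᵐᵒᵖ N]
    (hb : IsHochschildBoundary k b) (huv : ∑ c, v c * u c = 1) (n : ℕ) :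
    b (n + 1) ∘ₗ conjHomotopy k u v (n + 1) + conjHomotopy k u v n ∘ₗ b n
      = cyclicConj k u v (n + 1) - LinearMap.id := by
  refine HChain.ext_seqGen fun x s => ?_
  have lower (t j : ℕ) (hjt : j ≤ t) (ht : t < n + 1) :
      faceConjTerm k u v (n + 1) (t + 1) j x s
        = conjTerm k u v n t (faceCoeff n j x s) (faceSeq j s) := by
    cases j with
    | zero => exact faceConjTerm_lower_zero huv n t x s
    | succ j => exact faceConjTerm_lower_succ huv hjt (Nat.le_of_lt_succ ht) x s
  have key := sum_neg_one_pow_smul_simplicialHomotopy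
    (fun t j => faceConjTerm k u v (n + 1) t j x s)
    (fun t j => conjTerm k u v n t (faceCoeff n j x s) (faceSeq j s)) (n + 1) lower
    (fun t j htj hj => faceConjTerm_upper htj hj x s)
    (fun t ht => faceConjTerm_diag huv ht x s)
  rw [LinearMap.add_apply, LinearMap.comp_apply, LinearMap.comp_apply, hb.apply_conjHomotopy,
    hb.conjHomotopy_apply, ← neg_add, key, faceConjTerm_zero_zero huv, faceConjTerm_last, neg_sub]
  rfl

end Homotopy

section TripleTensor

variable {k : Type u} (R S : Type u) [CommRing k] [Ring R] [Ring S] [Algebra k S]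
  {P Q M Mt : Type u} [AddCommGroup P] [Module k P] [Module S P] [Module Rᵐᵒᵖ P]
  [AddCommGroup Q] [Module k Q] [Module R Q] [Module Sᵐᵒᵖ Q]
  [AddCommGroup M] [Module k M] [Module R M] [Module Rᵐᵒᵖ M]
  [AddCommGroup Mt] [Module k Mt] [Module S Mt] [Module Sᵐᵒᵖ Mt]
  (emb : P →ₗ[k] M →ₗ[k] Q →ₗ[k] Mt)

/-- The trilinear map `emb` exhibits `Mt` as an `(S, S)`-bimodule quotient of `P ⊗_R M ⊗_R Q`,
`emb p m q` being the class of `p ⊗ m ⊗ q`. -/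
structure IsTripleTensor : Prop where
  balanced_left (r : R) (p : P) (m : M) (q : Q) : emb (op r • p) m q = emb p (r • m) q
  balanced_right (r : R) (p : P) (m : M) (q : Q) : emb p (op r • m) q = emb p m (r • q)
  smul_left (s : S) (p : P) (m : M) (q : Q) : emb (s • p) m q = s • emb p m q
  smul_right (s : S) (p : P) (m : M) (q : Q) : emb p m (op s • q) = op s • emb p m q
  span_eq_top : Submodule.span k {x | ∃ p m q, emb p m q = x} = ⊤

variable {R S emb}

theorem IsTripleTensor.chain_ext (hemb : IsTripleTensor R S emb) {n : ℕ} {C : Type*}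
    [AddCommGroup C] [Module k C] {f g : HChain k S Mt n →ₗ[k] C}
    (h : ∀ p m q s, f (hgen k (emb p m q) s) = g (hgen k (emb p m q) s)) : f = g := by
  refine TensorProduct.ext (LinearMap.ext_on hemb.span_eq_top ?_)
  rintro _ ⟨p, m, q, rfl⟩
  exact PiTensorProduct.ext (MultilinearMap.ext fun s => h p m q s)

end TripleTensor

section Morita

variable {k R S P Q : Type u} [CommRing k] [Ring R] [Ring S] [Algebra k R] [Algebra k S]
  [AddCommGroup P] [Module k P] [Module S P] [Module Rᵐᵒᵖ P]
  [SMulCommClass S Rᵐᵒᵖ P] [IsScalarTower k S P] [IsScalarTower k Rᵐᵒᵖ P]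
  [AddCommGroup Q] [Module k Q] [Module R Q] [Module Sᵐᵒᵖ Q]
  [SMulCommClass R Sᵐᵒᵖ Q] [IsScalarTower k R Q] [IsScalarTower k Sᵐᵒᵖ Q]
  (ctx : MoritaContext k R S P Q) {ι κ : Type*} (pI : ι → P) (qI : ι → Q) (pJ : κ → P) (qJ : κ → Q)

theorem MoritaContext.φ_mul_φ (p p' : P) (q q' : Q) :
    ctx.φ p q * ctx.φ p' q' = ctx.φ p (ctx.ψ q p' • q') := by
  rw [ctx.assoc_ψφ, ctx.φ_right]

theorem MoritaContext.sum_φ_mul_φ_eq_one [Fintype ι] [Fintype κ]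
    (hI : ∑ i, ctx.ψ (qI i) (pI i) = 1) (hJ : ∑ j, ctx.φ (pJ j) (qJ j) = 1) :
    ∑ a : ι × κ, ctx.φ (pJ a.2) (qI a.1) * ctx.φ (pI a.1) (qJ a.2) = 1 := by
  simp only [ctx.φ_mul_φ, Fintype.sum_prod_type_right, ← map_sum, ← Finset.sum_smul, hI, one_smul,
    hJ]

theorem MoritaContext.φ_ψ_smul_smul (s : S) (p p' : P) (q q' : Q) :
    ctx.φ p (ctx.ψ q (s • p') • q') = ctx.φ p q * s * ctx.φ p' q' := by
  rw [← ctx.φ_mul_φ, ctx.φ_left, mul_assoc]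

variable {M Mt : Type u} [AddCommGroup M] [Module k M] [Module R M] [Module Rᵐᵒᵖ M]
  [AddCommGroup Mt] [Module k Mt] [Module S Mt] [Module Sᵐᵒᵖ Mt]
  {emb : P →ₗ[k] M →ₗ[k] Q →ₗ[k] Mt}

theorem IsTripleTensor.ψ_smul_smul (hemb : IsTripleTensor R S emb) (p p₁ p₂ : P) (q q₁ q₂ : Q)
    (m : M) :
    emb p₁ (ctx.ψ q₁ p • op (ctx.ψ q p₂) • m) q₂
      = ctx.φ p₁ q₁ • op (ctx.φ p₂ q₂) • emb p m q := by
  rw [← hemb.balanced_left, hemb.balanced_right, ← ctx.assoc_φψ, ctx.assoc_ψφ, hemb.smul_left,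
    hemb.smul_right]

variable [IsScalarTower k S Mt] [IsScalarTower k Sᵐᵒᵖ Mt] [Fintype ι] [Fintype κ]

theorem IsTripleTensor.θ_comp_γ_eq_cyclicConj (hemb : IsTripleTensor R S emb) {n : ℕ}
    {θ : HChain k R M n →ₗ[k] HChain k S Mt n}
    (hθ : ∀ (m : M) (r : Fin n → R), θ (hgen k m r) =
      ∑ f : Fin (n + 1) → ι, hgen k (emb (pI (f 0)) m (qI (f 1)))
        (fun l : Fin n => ctx.φ (pI (f l.succ)) (r l • qI (f (l.succ + 1)))))
    {γ : HChain k S Mt n →ₗ[k] HChain k R M n}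
    (hγ : ∀ (p : P) (m : M) (q : Q) (s : Fin n → S), γ (hgen k (emb p m q) s) =
      ∑ g : Fin (n + 1) → κ, hgen k (ctx.ψ (qJ (g 0)) p • op (ctx.ψ q (pJ (g 1))) • m)
        (fun l : Fin n => ctx.ψ (qJ (g l.succ)) (s l • pJ (g (l.succ + 1))))) :
    θ ∘ₗ γ = cyclicConj k (fun a : ι × κ => ctx.φ (pI a.1) (qJ a.2))
      (fun a => ctx.φ (pJ a.2) (qI a.1)) n := by
  refine hemb.chain_ext fun p m q s => ?_
  rw [LinearMap.comp_apply, cyclicConj_hgen, hγ, map_sum,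
    ← (Equiv.arrowProdEquivProdArrow (Fin (n + 1)) (fun _ => ι) (fun _ => κ)).symm.sum_comp,
    Fintype.sum_prod_type_right]
  simp only [hθ, hemb.ψ_smul_smul, ctx.φ_ψ_smul_smul]
  rfl

end Morita

/-- Let `(R, S, P, Q, φ, ψ)` be a Morita context over `k` and `M` an
`(R,R)`-bimodule with symmetric `k`-action.  Then the composite `θ_• ∘ γ_•` is chain
homotopic to the identity of `C_•(S, M̃)`:  there exist `k`-linear maps
`h̃_n : C_n(S, M̃) → C_{n+1}(S, M̃)` with `b ∘ h̃_0 = θ_0 ∘ γ_0 − id` and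
`b ∘ h̃_n + h̃_{n−1} ∘ b = θ_n ∘ γ_n − id` for all `n ≥ 1`. -/
theorem theta_gamma_homotopic_id
    (k R S P Q M Mt : Type u) [CommRing k] [Ring R] [Ring S] [Algebra k R] [Algebra k S]
    [AddCommGroup P] [Module k P] [Module S P] [Module Rᵐᵒᵖ P]
    [SMulCommClass S Rᵐᵒᵖ P] [IsScalarTower k S P] [IsScalarTower k Rᵐᵒᵖ P]
    [AddCommGroup Q] [Module k Q] [Module R Q] [Module Sᵐᵒᵖ Q]
    [SMulCommClass R Sᵐᵒᵖ Q] [IsScalarTower k R Q] [IsScalarTower k Sᵐᵒᵖ Q]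
    [AddCommGroup M] [Module k M] [Module R M] [Module Rᵐᵒᵖ M]
    [SMulCommClass R Rᵐᵒᵖ M] [IsScalarTower k R M] [IsScalarTower k Rᵐᵒᵖ M]
    [AddCommGroup Mt] [Module k Mt] [Module S Mt] [Module Sᵐᵒᵖ Mt]
    [SMulCommClass S Sᵐᵒᵖ Mt] [IsScalarTower k S Mt] [IsScalarTower k Sᵐᵒᵖ Mt]
    -- the Morita context and the fixed finite families with `Σⱼ φ(p'ⱼ ⊗ q'ⱼ) = 1_S`
    -- and `Σᵢ ψ(qᵢ ⊗ pᵢ) = 1_R`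
    (ctx : MoritaContext k R S P Q)
    (ι κ : Type u) [Fintype ι] [Fintype κ]
    (pI : ι → P) (qI : ι → Q) (pJ : κ → P) (qJ : κ → Q)
    (hI : ∑ i : ι, ctx.ψ (qI i) (pI i) = 1)
    (hJ : ∑ j : κ, ctx.φ (pJ j) (qJ j) = 1)
    -- `Mt` plays the role of `M̃ = P ⊗_R M ⊗_R Q`, with `emb p m q` the class of
    -- `p ⊗ m ⊗ q`; it is an `(S,S)`-bimodule spanned by these classes, the `S`-actions
    -- being `s·(p ⊗ m ⊗ q)·s' = (s·p) ⊗ m ⊗ (q·s')`, and the tensor products are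
    -- balanced over `R`
    (emb : P →ₗ[k] M →ₗ[k] Q →ₗ[k] Mt)
    (hemb_bal₁ : ∀ (r : R) (p : P) (m : M) (q : Q), emb (op r • p) m q = emb p (r • m) q)
    (hemb_bal₂ : ∀ (r : R) (p : P) (m : M) (q : Q), emb p (op r • m) q = emb p m (r • q))
    (hemb_left : ∀ (s : S) (p : P) (m : M) (q : Q), emb (s • p) m q = s • emb p m q)
    (hemb_right : ∀ (s : S) (p : P) (m : M) (q : Q), emb p m (op s • q) = op s • emb p m q)
    (hemb_span : Submodule.span k {x : Mt | ∃ (p : P) (m : M) (q : Q), emb p m q = x} = ⊤)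
    -- the Hochschild boundaries of `C_•(R, M)` and `C_•(S, M̃)`
    (bR : ∀ n, HChain k R M (n + 1) →ₗ[k] HChain k R M n)
    (hbR : ∀ (n : ℕ) (m : M) (r : Fin (n + 1) → R),
      bR n (hgen k m r) =
        hgen k (r (Fin.last n) • m) (Fin.init r)
          + ∑ j : Fin n, ((-1 : ℤ) ^ (n - j.val)) • hgen k m (mergeAt r j)
          + ((-1 : ℤ) ^ (n + 1)) • hgen k (op (r 0) • m) (Fin.tail r))
    (bS : ∀ n, HChain k S Mt (n + 1) →ₗ[k] HChain k S Mt n)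
    (hbS : ∀ (n : ℕ) (m : Mt) (s : Fin (n + 1) → S),
      bS n (hgen k m s) =
        hgen k (s (Fin.last n) • m) (Fin.init s)
          + ∑ j : Fin n, ((-1 : ℤ) ^ (n - j.val)) • hgen k m (mergeAt s j)
          + ((-1 : ℤ) ^ (n + 1)) • hgen k (op (s 0) • m) (Fin.tail s))
    -- the chain map `θ_•`
    (θ : ∀ n, HChain k R M n →ₗ[k] HChain k S Mt n)
    (hθ : ∀ (n : ℕ) (m : M) (r : Fin n → R),
      θ n (hgen k m r) =
        ∑ f : Fin (n + 1) → ι,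
          hgen k (emb (pI (f 0)) m (qI (f 1)))
            (fun l : Fin n => ctx.φ (pI (f l.succ)) (r l • qI (f (l.succ + 1)))))
    -- the chain map `γ_•`
    (γ : ∀ n, HChain k S Mt n →ₗ[k] HChain k R M n)
    (hγ : ∀ (n : ℕ) (p : P) (m : M) (q : Q) (s : Fin n → S),
      γ n (hgen k (emb p m q) s) =
        ∑ g : Fin (n + 1) → κ,
          hgen k (ctx.ψ (qJ (g 0)) p • (op (ctx.ψ q (pJ (g 1))) • m))
            (fun l : Fin n => ctx.ψ (qJ (g l.succ)) (s l • pJ (g (l.succ + 1)))))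
 :
    ∃ ht : ∀ n, HChain k S Mt n →ₗ[k] HChain k S Mt (n + 1),
      (bS 0).comp (ht 0) = (θ 0).comp (γ 0) - LinearMap.id ∧
      ∀ n : ℕ, (bS (n + 1)).comp (ht (n + 1)) + (ht n).comp (bS n)
        = (θ (n + 1)).comp (γ (n + 1)) - LinearMap.id := by
  have hb : IsHochschildBoundary k bS := hbS
  have hemb : IsTripleTensor R S emb := ⟨hemb_bal₁, hemb_bal₂, hemb_left, hemb_right, hemb_span⟩
  have huv := ctx.sum_φ_mul_φ_eq_one pI qI pJ qJ hI hJ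
  have hθγ (n : ℕ) := hemb.θ_comp_γ_eq_cyclicConj ctx pI qI pJ qJ (hθ n) (hγ n)
  simp only [hθγ]
  exact ⟨conjHomotopy k _ _, hb.comp_conjHomotopy_zero huv, hb.comp_conjHomotopy_succ huv⟩
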